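/- arXiv:1203.3282 — 4 statements merged into one kernel-verified Lean document; each statement's English description precedes it below -/
import Mathlib

section
/- Let m ≥ 1. A vector z ∈ U_m^{2^m} satisfies z·G_{2^m} = 0 if and only if, for every row index j ∈ {0,1}^m, the component z_j is divisible by u^{m−w(j)} in U_m, where w(j) is the Hamming weight of j. Consequently the kernel of the encoding map z ↦ z·G_{2^m} has cardinality 2^{m·2^{m-1}}. -/
open Polynomial

noncomputable section

/-- `F2` is the binary field. -/
abbrev F2 := ZMod 2

/-- `Um m` is the polynomial quotient ring `F₂[u] / (u^m)`. -/
abbrev Um (m : ℕ) := Polynomial F2 ⧸ Ideal.span {(X : Polynomial F2) ^ m}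

/-- `uu m` is the class of the variable in `Um m`. -/
def uu (m : ℕ) : Um m := Ideal.Quotient.mk _ (X : Polynomial F2)

/-- `Gmat m` is the `m`-fold Kronecker power over `Um m` of `[[1,1],[0,u]]`. -/
def Gmat (m : ℕ) : Matrix (Fin m → Fin 2) (Fin m → Fin 2) (Um m) :=
  Matrix.of fun j k => ∏ t, (!![1, 1; 0, uu m] : Matrix (Fin 2) (Fin 2) (Um m)) (j t) (k t)

/-- `w j` is the Hamming weight of the binary string `j`. -/
def w {m : ℕ} (j : Fin m → Fin 2) : ℕ := ∑ t, (j t : ℕ)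

/-!
The Kronecker power is upper triangular for the product order on binary words, and the diagonal
entry `u ^ w j` divides the whole row `j`. Substituting forward along that order, `z * G = 0`
decouples into the scalar equations `z j * u ^ w j = 0`. In `R ⧸ (u ^ m)` with `u` regular, the
annihilator of `u ^ k` is generated by `u ^ (m - k)` and is isomorphic to `R ⧸ (u ^ k)`, which has
`|R ⧸ (u)| ^ k` elements. The total exponent is the sum of the Hamming weights of all words.
-/

section TriangularKernel

variable {ι S : Type*} [Fintype ι] [PartialOrder ι] [NonUnitalSemiring S]

theorem vecMul_eq_zero_iff_of_diag_dvd {A : Matrix ι ι S}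
    (htri : ∀ i j, ¬i ≤ j → A i j = 0) (hdvd : ∀ i j, A i i ∣ A i j) (z : ι → S) :
    Matrix.vecMul z A = 0 ↔ ∀ i, z i * A i i = 0 := by
  constructor
  · intro hz j
    induction j using WellFoundedLT.induction with
    | ind j ih =>
      have hoff : ∀ i ≠ j, z i * A i j = 0 := by
        intro i hij
        by_cases hle : i ≤ j
        · obtain ⟨c, hc⟩ := hdvd i j
          rw [hc, ← mul_assoc, ih i (lt_of_le_of_ne hle hij), zero_mul]
        · rw [htri i j hle, mul_zero]
      calc z j * A j j = ∑ i, z i * A i j := (Fintype.sum_eq_single j hoff).symm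
        _ = 0 := congrFun hz j
  · refine fun hz => funext fun j => Finset.sum_eq_zero fun i _ => ?_
    obtain ⟨c, hc⟩ := hdvd i j
    calc z i * A i j = z i * A i i * c := by rw [hc, mul_assoc]
      _ = 0 := by rw [hz i, zero_mul]

end TriangularKernel

section KroneckerPower

variable {n S : Type*}

/-- The Kronecker power of a square matrix with one factor for each element of `ι`, its rows and
columns indexed by the words `ι → n`. -/
def kroneckerPow [CommMonoid S] (ι : Type*) [Fintype ι] (A : Matrix n n S) :
    Matrix (ι → n) (ι → n) S :=
  Matrix.of fun j k => ∏ t, A (j t) (k t)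

variable {ι : Type*} [Fintype ι]

theorem kroneckerPow_diag_dvd [CommMonoid S] {A : Matrix n n S} (h : ∀ a b, A a a ∣ A a b)
    (j k : ι → n) : kroneckerPow ι A j j ∣ kroneckerPow ι A j k :=
  Finset.prod_dvd_prod_of_dvd _ _ fun t _ => h (j t) (k t)

theorem kroneckerPow_eq_zero_of_not_le [LE n] [CommMonoidWithZero S] {A : Matrix n n S}
    (h : ∀ a b, ¬a ≤ b → A a b = 0) {j k : ι → n} (hjk : ¬j ≤ k) : kroneckerPow ι A j k = 0 := by
  obtain ⟨t, ht⟩ := not_forall.mp hjk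
  exact Finset.prod_eq_zero (Finset.mem_univ t) (h _ _ ht)

end KroneckerPower

section PolarMatrix

/-- The polar code kernel `[[1,1],[0,a]]`. The parameter `a` is arbitrary here and is specialized to
the class of `u` in the theorem. -/
def polarKernel {S : Type*} [Zero S] [One S] (a : S) : Matrix (Fin 2) (Fin 2) S := !![1, 1; 0, a]

variable {m : ℕ}

theorem kroneckerPow_polarKernel_diag {S : Type*} [CommMonoidWithZero S] (a : S)
    (j : Fin m → Fin 2) : kroneckerPow (Fin m) (polarKernel a) j j = a ^ w j := by
  have hdiag : ∀ b : Fin 2, polarKernel a b b = a ^ (b : ℕ) := by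
    simp [Fin.forall_fin_two, polarKernel]
  simp only [kroneckerPow, Matrix.of_apply, hdiag, Finset.prod_pow_eq_pow_sum, w]

theorem vecMul_kroneckerPow_polarKernel_eq_zero_iff {S : Type*} [CommSemiring S] (a : S)
    (z : (Fin m → Fin 2) → S) :
    Matrix.vecMul z (kroneckerPow (Fin m) (polarKernel a)) = 0 ↔ ∀ j, z j * a ^ w j = 0 := by
  have htri : ∀ b c : Fin 2, ¬b ≤ c → polarKernel a b c = 0 := by
    simp [Fin.forall_fin_two, polarKernel]
  have hdvd : ∀ b c : Fin 2, polarKernel a b b ∣ polarKernel a b c := by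
    simp [Fin.forall_fin_two, polarKernel]
  simp only [vecMul_eq_zero_iff_of_diag_dvd (fun _ _ => kroneckerPow_eq_zero_of_not_le htri)
    (kroneckerPow_diag_dvd hdvd), kroneckerPow_polarKernel_diag]

end PolarMatrix

section HammingWeight

theorem w_le {m : ℕ} (j : Fin m → Fin 2) : w j ≤ m :=
  calc ∑ t, (j t : ℕ) ≤ ∑ _t : Fin m, 1 := Finset.sum_le_sum fun t _ => (j t).is_le
    _ = m := by simp

theorem sum_w (m : ℕ) : ∑ j : Fin m → Fin 2, w j = m * 2 ^ (m - 1) := by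
  have hcoord : ∀ t : Fin m, ∑ j : Fin m → Fin 2, (j t : ℕ) = 2 ^ (m - 1) := fun t => by
    simpa using Fintype.sum_piFinset_apply (fun b : Fin 2 => (b : ℕ)) Finset.univ t
  calc ∑ j : Fin m → Fin 2, w j = ∑ t, ∑ j : Fin m → Fin 2, (j t : ℕ) := Finset.sum_comm
    _ = m * 2 ^ (m - 1) := by simp [hcoord]

end HammingWeight

section PrincipalQuotient

variable {R : Type*} [CommRing R]

theorem mem_span_mk_iff_dvd {I : Ideal R} {a : R} {x : R ⧸ I} :
    x ∈ Submodule.span R {Ideal.Quotient.mk I a} ↔ Ideal.Quotient.mk I a ∣ x := by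
  rw [Submodule.mem_span_singleton, dvd_def, Ideal.Quotient.mk_surjective.exists]
  simp only [Algebra.smul_def, Ideal.Quotient.algebraMap_eq, mul_comm, eq_comm]

theorem mk_dvd_mk_iff_of_dvd {a c r : R} (hac : a ∣ c) :
    Ideal.Quotient.mk (Ideal.span {c}) a ∣ Ideal.Quotient.mk _ r ↔ a ∣ r := by
  rw [← Ideal.mem_span_singleton, ← Set.image_singleton, ← Ideal.map_span,
    Ideal.mem_quotient_iff_mem (Ideal.span_singleton_le_span_singleton.mpr hac),
    Ideal.mem_span_singleton]

theorem mul_mk_eq_zero_iff_mk_dvd {a b c : R} (hb : b ∈ nonZeroDivisors R) (hc : a * b = c)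
    {x : R ⧸ Ideal.span {c}} :
    x * Ideal.Quotient.mk _ b = 0 ↔ Ideal.Quotient.mk _ a ∣ x := by
  obtain ⟨r, rfl⟩ := Ideal.Quotient.mk_surjective x
  rw [mk_dvd_mk_iff_of_dvd (Dvd.intro b hc), ← map_mul, Ideal.Quotient.eq_zero_iff_dvd, ← hc,
    dvd_cancel_right_mem_nonZeroDivisors hb]

theorem mul_mk_pow_eq_zero_iff {u : R} (hu : u ∈ nonZeroDivisors R) {k N : ℕ} (hk : k ≤ N)
    {x : R ⧸ Ideal.span {u ^ N}} :
    x * Ideal.Quotient.mk _ u ^ k = 0 ↔ Ideal.Quotient.mk _ u ^ (N - k) ∣ x := by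
  simp only [← map_pow]
  exact mul_mk_eq_zero_iff_mk_dvd (pow_mem hu k) (by rw [← pow_add, Nat.sub_add_cancel hk])

theorem torsionOf_mk_eq_span {a b c : R} (ha : a ∈ nonZeroDivisors R) (hc : a * b = c) :
    Ideal.torsionOf R _ (Ideal.Quotient.mk (Ideal.span {c}) a) = Ideal.span {b} := by
  ext r
  rw [Ideal.mem_torsionOf_iff, Algebra.smul_def, Ideal.Quotient.algebraMap_eq, ← map_mul,
    Ideal.Quotient.eq_zero_iff_dvd, ← hc, mul_comm r, dvd_cancel_left_mem_nonZeroDivisors ha,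
    Ideal.mem_span_singleton]

theorem card_span_mk_eq_card_quotient {a b c : R} (ha : a ∈ nonZeroDivisors R) (hc : a * b = c) :
    Nat.card (Submodule.span R {Ideal.Quotient.mk (Ideal.span {c}) a}) =
      Nat.card (R ⧸ Ideal.span {b}) := by
  rw [← torsionOf_mk_eq_span ha hc]
  exact Nat.card_congr (Ideal.quotTorsionOfEquivSpanSingleton R _ _).symm.toEquiv

theorem card_quotient_span_mul {a : R} (ha : a ∈ nonZeroDivisors R) (b : R) :
    Nat.card (R ⧸ Ideal.span {a * b}) =
      Nat.card (R ⧸ Ideal.span {a}) * Nat.card (R ⧸ Ideal.span {b}) := by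
  have hle : Ideal.span {a * b} ≤ Ideal.span {a} :=
    Ideal.span_singleton_le_span_singleton.mpr (dvd_mul_right a b)
  have hmap : Submodule.map (Ideal.span {a * b}).mkQ (Ideal.span {a}) =
      Submodule.span R {Ideal.Quotient.mk (Ideal.span {a * b}) a} := by
    rw [Submodule.map_span, Set.image_singleton]
    rfl
  rw [← Submodule.card_quotient_mul_card_quotient _ _ hle, hmap,
    card_span_mk_eq_card_quotient ha rfl, mul_comm]

theorem card_quotient_span_pow {u : R} (hu : u ∈ nonZeroDivisors R) (n : ℕ) :
    Nat.card (R ⧸ Ideal.span {u ^ n}) = Nat.card (R ⧸ Ideal.span {u}) ^ n := by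
  induction n with
  | zero => simp
  | succ n ih => rw [pow_succ', card_quotient_span_mul hu, ih, pow_succ']

theorem card_subtype_mk_pow_dvd {u : R} (hu : u ∈ nonZeroDivisors R) {k N : ℕ} (hk : k ≤ N) :
    Nat.card {x : R ⧸ Ideal.span {u ^ N} // Ideal.Quotient.mk _ u ^ (N - k) ∣ x} =
      Nat.card (R ⧸ Ideal.span {u}) ^ k := by
  simp only [← map_pow, ← mem_span_mk_iff_dvd]
  rw [← card_quotient_span_pow hu]
  exact card_span_mk_eq_card_quotient (pow_mem hu _) (by rw [← pow_add, Nat.sub_add_cancel hk])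

theorem card_polynomial_quotient_span_X :
    Nat.card (R[X] ⧸ Ideal.span {(X : R[X])}) = Nat.card R := by
  simpa using Nat.card_congr (quotientSpanXSubCAlgEquiv (0 : R)).toEquiv

instance finite_polynomial_quotient_span_X [Finite R] :
    Finite (R[X] ⧸ Ideal.span {(X : R[X])}) := by
  simpa using Finite.of_equiv R (quotientSpanXSubCAlgEquiv (0 : R)).symm.toEquiv

end PrincipalQuotient

theorem stmt2_general {R : Type*} [CommRing R] {u : R} (hu : u ∈ nonZeroDivisors R)
    [Finite (R ⧸ Ideal.span {u})] {m N : ℕ} (hmN : m ≤ N) :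
    let v : R ⧸ Ideal.span {u ^ N} := Ideal.Quotient.mk _ u
    let G := kroneckerPow (Fin m) (polarKernel v)
    (∀ z, Matrix.vecMul z G = 0 ↔ ∀ j, v ^ (N - w j) ∣ z j) ∧
      Nat.card {z | Matrix.vecMul z G = 0} =
        Nat.card (R ⧸ Ideal.span {u}) ^ (m * 2 ^ (m - 1)) := by
  intro v G
  have hle (j : Fin m → Fin 2) : w j ≤ N := (w_le j).trans hmN
  have hker (z) : Matrix.vecMul z G = 0 ↔ ∀ j, v ^ (N - w j) ∣ z j := by
    rw [vecMul_kroneckerPow_polarKernel_eq_zero_iff]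
    exact forall_congr' fun j => mul_mk_pow_eq_zero_iff hu (hle j)
  refine ⟨hker, ?_⟩
  calc Nat.card {z | Matrix.vecMul z G = 0}
      = Nat.card (∀ j : Fin m → Fin 2, {x // v ^ (N - w j) ∣ x}) :=
        Nat.card_congr ((Equiv.subtypeEquivRight hker).trans Equiv.subtypePiEquivPi)
    _ = ∏ j : Fin m → Fin 2, Nat.card (R ⧸ Ideal.span {u}) ^ w j := by
        rw [Nat.card_pi]
        exact Finset.prod_congr rfl fun j _ => card_subtype_mk_pow_dvd hu (hle j)
    _ = Nat.card (R ⧸ Ideal.span {u}) ^ (m * 2 ^ (m - 1)) := by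
        rw [Finset.prod_pow_eq_pow_sum, sum_w]

/-- A vector `z ∈ U_m^{2^m}` satisfies `z · G_{2^m} = 0` iff for each row index `j`
the component `z j` is divisible by `u^{m - w(j)}` in `U_m`; consequently the kernel of
the encoding map has cardinality `2^{m·2^{m-1}}`. -/
theorem stmt2 (m : ℕ) (hm : 1 ≤ m) :
    (∀ z : (Fin m → Fin 2) → Um m,
      Matrix.vecMul z (Gmat m) = 0 ↔ ∀ j, uu m ^ (m - w j) ∣ z j) ∧
    Nat.card {z : (Fin m → Fin 2) → Um m | Matrix.vecMul z (Gmat m) = 0} =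
      2 ^ (m * 2 ^ (m - 1)) := by
  simpa [card_polynomial_quotient_span_X] using!
    stmt2_general (monic_X (R := F2)).mem_nonZeroDivisors (le_refl m)

end
end

section
/- Let m ≥ 1. The code C_{2^m} = { z·G_{2^m} : z ∈ U_m^{2^m} } coincides with the multilevel (Construction D) code { Σ_{r=0}^{m-1} u^r · ι(c_r) : c_r ∈ RM(r,m) }, where ι : F₂^{2^m} → U_m^{2^m} is the componentwise inclusion sending 0 ↦ 0 and 1 ↦ 1. Moreover the representation is unique: if Σ_{r=0}^{m-1} u^r ι(c_r) = Σ_{r=0}^{m-1} u^r ι(c'_r) with c_r, c'_r ∈ RM(r,m) for all r, then c_r = c'_r for all r. -/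
open Polynomial

noncomputable section

/-- `Bmat m` is the `m`-fold Kronecker power over `F₂` of `[[1,1],[0,1]]`. -/
def Bmat (m : ℕ) : Matrix (Fin m → Fin 2) (Fin m → Fin 2) F2 :=
  Matrix.of fun j k => ∏ t, (!![1, 1; 0, 1] : Matrix (Fin 2) (Fin 2) F2) (j t) (k t)

/-- The Reed–Muller code `RM(r,m)`: the `F₂`-span of the rows of `Bmat m` whose row
index has Hamming weight at most `r`. -/
def RM (m r : ℕ) : Submodule F2 ((Fin m → Fin 2) → F2) :=
  Submodule.span F2 ((fun j => Bmat m j) '' {j | w j ≤ r})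

/-- `iotaUm m` is the componentwise inclusion `F₂^{2^m} → U_m^{2^m}` sending `0 ↦ 0`
and `1 ↦ 1`. -/
def iotaUm (m : ℕ) (c : (Fin m → Fin 2) → F2) : (Fin m → Fin 2) → Um m :=
  fun k => ((c k).val : Um m)

/-!
Row `j` of `Gmat m` is `u ^ w j` times row `j` of `Bmat m`, because the two `2 × 2` kernels differ
only by the factor `u` in the second row. Expanding the multipliers `z j` in powers of `u`, row `j`
contributes to the coefficient of `u ^ r` only when `w j ≤ r`, so that coefficient lies in the span
of the rows of weight at most `r`. Conversely, if `w j ≤ r` then `u ^ r` times row `j` of `Bmat m`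
is `u ^ (r - w j)` times row `j` of `Gmat m`. Uniqueness is the uniqueness of `u`-adic digits
modulo `u ^ m`. The argument works for any matrix whose rows carry weights, over any commutative
coefficient ring.
-/

/-- The truncated polynomial ring `R[u] / (u^m)`, generalizing `Um m` to arbitrary coefficients. -/
abbrev TruncPoly (R : Type*) [CommRing R] (m : ℕ) := R[X] ⧸ Ideal.span {(X : R[X]) ^ m}

namespace TruncPoly

variable {R : Type*} [CommRing R] {m : ℕ}

/-- The class `u` of the variable in `R[u] / (u^m)`, generalizing `uu m`. -/
def root (R : Type*) [CommRing R] (m : ℕ) : TruncPoly R m := Ideal.Quotient.mk _ X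

/-- The element `∑ r, u ^ r * a r` of `R[u] / (u^m)` with the `u`-adic digits `a`. -/
def ofDigits (a : Fin m → R) : TruncPoly R m :=
  ∑ r : Fin m, root R m ^ (r : ℕ) * algebraMap R (TruncPoly R m) (a r)

lemma mk_eq_mk_iff_coeff {p q : R[X]} :
    (Ideal.Quotient.mk _ p : TruncPoly R m) = Ideal.Quotient.mk _ q ↔
      ∀ r < m, p.coeff r = q.coeff r := by
  simp only [Ideal.Quotient.eq, Ideal.mem_span_singleton, X_pow_dvd_iff, coeff_sub, sub_eq_zero]

lemma ofDigits_eq_mk_ofFn [DecidableEq R] (a : Fin m → R) :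
    ofDigits a = Ideal.Quotient.mk _ (Polynomial.ofFn m a) := by
  simp only [ofDigits, root, ofFn_eq_sum_monomial, ← C_mul_X_pow_eq_monomial, map_sum, map_mul,
    map_pow]
  exact Finset.sum_congr rfl fun r _ => mul_comm _ _

lemma mk_eq_ofDigits_coeff (p : R[X]) :
    (Ideal.Quotient.mk _ p : TruncPoly R m) = ofDigits fun r => p.coeff r := by
  classical
  rw [ofDigits_eq_mk_ofFn, mk_eq_mk_iff_coeff]
  intro r hr
  rw [ofFn_coeff_eq_val_of_lt _ hr]

lemma ofDigits_injective : Function.Injective (ofDigits : (Fin m → R) → TruncPoly R m) := by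
  classical
  intro a b hab
  rw [ofDigits_eq_mk_ofFn, ofDigits_eq_mk_ofFn, mk_eq_mk_iff_coeff] at hab
  funext r
  simpa only [ofFn_coeff_eq_val_of_lt _ r.isLt] using hab r r.isLt

end TruncPoly

section Multilevel

open TruncPoly

variable {R : Type*} [CommRing R] {J K : Type*} {m : ℕ}

/-- The Construction D sum `∑ r, u ^ r * c r` of a family of words `c r` over `R`, which is a word
over `R[u] / (u^m)`. -/
def multilevelSum (c : Fin m → K → R) : K → TruncPoly R m := fun k => ofDigits fun r => c r k

/-- The `r`-th level of the multilevel code of a matrix `B` whose rows have weights `wt`: the span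
of the rows of weight at most `r`. It generalizes the Reed–Muller code `RM m r`. -/
def levelCode (wt : J → ℕ) (B : Matrix J K R) (r : ℕ) : Submodule R (K → R) :=
  Submodule.span R (B '' {j | wt j ≤ r})

/-- The matrix over `R[u] / (u^m)` obtained from `B` by scaling each row `j` by `u ^ wt j`. It
generalizes `Gmat m`. -/
def weightedMatrix (m : ℕ) (wt : J → ℕ) (B : Matrix J K R) : Matrix J K (TruncPoly R m) :=
  Matrix.of fun j k => root R m ^ wt j * algebraMap R (TruncPoly R m) (B j k)

lemma multilevelSum_injective :
    Function.Injective (multilevelSum : (Fin m → K → R) → K → TruncPoly R m) := by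
  intro c c' h
  funext r k
  exact congrFun (ofDigits_injective (congrFun h k)) r

lemma multilevelSum_eq_sum_smul (c : Fin m → K → R) :
    multilevelSum c =
      ∑ r : Fin m, root R m ^ (r : ℕ) • (Algebra.linearMap R (TruncPoly R m)).compLeft K (c r) := by
  funext k
  simp [multilevelSum, ofDigits]

variable (wt : J → ℕ) (B : Matrix J K R)

lemma weightedMatrix_apply_eq_mk (j : J) (k : K) :
    weightedMatrix m wt B j k = Ideal.Quotient.mk _ (X ^ wt j * C (B j k)) := by
  rw [map_mul, map_pow]
  rfl

variable [Fintype J]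

lemma sum_coeff_X_pow_mul_smul_mem_levelCode (p : J → R[X]) (r : ℕ) :
    ∑ j, (X ^ wt j * p j).coeff r • B j ∈ levelCode wt B r := by
  refine Submodule.sum_mem _ fun j _ => ?_
  by_cases hj : wt j ≤ r
  · exact Submodule.smul_mem _ _ (Submodule.subset_span ⟨j, hj, rfl⟩)
  · rw [coeff_X_pow_mul', if_neg hj, zero_smul]
    exact Submodule.zero_mem _

lemma vecMul_mk_weightedMatrix (p : J → R[X]) :
    Matrix.vecMul (fun j => Ideal.Quotient.mk _ (p j)) (weightedMatrix m wt B) =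
      multilevelSum fun r => ∑ j, (X ^ wt j * p j).coeff r • B j := by
  funext k
  have hmk : Matrix.vecMul (fun j => Ideal.Quotient.mk _ (p j)) (weightedMatrix m wt B) k =
      Ideal.Quotient.mk _ (∑ j, X ^ wt j * p j * C (B j k)) := by
    simp only [Matrix.vecMul, dotProduct, weightedMatrix_apply_eq_mk, ← map_mul, map_sum,
      mul_left_comm (p _), mul_assoc]
  rw [hmk, mk_eq_ofDigits_coeff]
  simp only [multilevelSum, finsetSum_coeff, coeff_mul_C, Finset.sum_apply, Pi.smul_apply,
    smul_eq_mul]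

lemma root_pow_smul_mem_range_vecMul {c : K → R} {r : ℕ} (hc : c ∈ levelCode wt B r) :
    root R m ^ r • (Algebra.linearMap R (TruncPoly R m)).compLeft K c ∈
      LinearMap.range (weightedMatrix m wt B).vecMulLinear := by
  rw [range_vecMulLinear]
  induction hc using Submodule.span_induction with
  | mem _ hb =>
    obtain ⟨j, hj, rfl⟩ := hb
    have hrow : root R m ^ r • (Algebra.linearMap R (TruncPoly R m)).compLeft K (B j) =
        root R m ^ (r - wt j) • (weightedMatrix m wt B).row j := by
      funext k
      simp [weightedMatrix, ← mul_assoc, ← pow_add, Nat.sub_add_cancel hj]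
    rw [hrow]
    exact Submodule.smul_mem _ _ (Submodule.subset_span ⟨j, rfl⟩)
  | zero => simp
  | add x y _ _ hx hy =>
    rw [map_add, smul_add]
    exact Submodule.add_mem _ hx hy
  | smul a x _ hx =>
    rw [map_smul, smul_comm]
    exact Submodule.smul_of_tower_mem _ a hx

theorem stmt4_general (m : ℕ) :
    ({x | ∃ z, x = Matrix.vecMul z (weightedMatrix m wt B)} =
      {x | ∃ c : Fin m → K → R, (∀ r : Fin m, c r ∈ levelCode wt B r) ∧ x = multilevelSum c}) ∧
    Function.Injective (multilevelSum : (Fin m → K → R) → K → TruncPoly R m) := by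
  refine ⟨Set.ext fun x => ⟨?_, ?_⟩, multilevelSum_injective⟩
  · rintro ⟨z, rfl⟩
    choose p hp using fun j => Ideal.Quotient.mk_surjective (z j)
    obtain rfl : (fun j => Ideal.Quotient.mk _ (p j)) = z := funext hp
    exact ⟨_, fun r => sum_coeff_X_pow_mul_smul_mem_levelCode wt B p r,
      vecMul_mk_weightedMatrix wt B p⟩
  · rintro ⟨c, hc, rfl⟩
    have hmem : multilevelSum c ∈ LinearMap.range (weightedMatrix m wt B).vecMulLinear := by
      rw [multilevelSum_eq_sum_smul]
      exact Submodule.sum_mem _ fun r _ => root_pow_smul_mem_range_vecMul wt B (hc r)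
    obtain ⟨z, hz⟩ := hmem
    exact ⟨z, hz.symm⟩

end Multilevel

lemma Gmat_eq_weightedMatrix (m : ℕ) : Gmat m = weightedMatrix m w (Bmat m) := by
  have kernel (a b : Fin 2) : (!![1, 1; 0, uu m] : Matrix (Fin 2) (Fin 2) (Um m)) a b =
      uu m ^ (a : ℕ) * algebraMap F2 (Um m) ((!![1, 1; 0, 1] : Matrix (Fin 2) (Fin 2) F2) a b) := by
    fin_cases a <;> fin_cases b <;> simp
  ext j k
  simp only [Gmat, kernel, Finset.prod_mul_distrib, Finset.prod_pow_eq_pow_sum, ← map_prod,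
    Matrix.of_apply]
  rfl

lemma sum_uu_pow_mul_iotaUm (m : ℕ) (c : Fin m → (Fin m → Fin 2) → F2) :
    (fun k => ∑ r : Fin m, uu m ^ (r : ℕ) * iotaUm m (c r) k) = multilevelSum c := by
  have iotaUm_apply (a : (Fin m → Fin 2) → F2) (k : Fin m → Fin 2) :
      iotaUm m a k = algebraMap F2 (Um m) (a k) := by
    rw [iotaUm, ← map_natCast (algebraMap F2 (Um m)), ZMod.natCast_zmod_val]
  simp only [iotaUm_apply]
  rfl

/-- The code `C_{2^m}` coincides with the multilevel (Construction D) code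
`{ Σ_{r=0}^{m-1} u^r · ι(c_r) : c_r ∈ RM(r,m) }`, and the representation is unique. -/
theorem stmt4 (m : ℕ) (hm : 1 ≤ m) :
    ({x : (Fin m → Fin 2) → Um m | ∃ z, x = Matrix.vecMul z (Gmat m)} =
      {x : (Fin m → Fin 2) → Um m | ∃ c : Fin m → ((Fin m → Fin 2) → F2),
        (∀ r : Fin m, c r ∈ RM m (r : ℕ)) ∧
        x = fun k => ∑ r : Fin m, uu m ^ (r : ℕ) * iotaUm m (c r) k}) ∧
    ∀ c c' : Fin m → ((Fin m → Fin 2) → F2),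
      (∀ r : Fin m, c r ∈ RM m (r : ℕ)) → (∀ r : Fin m, c' r ∈ RM m (r : ℕ)) →
      (fun k => ∑ r : Fin m, uu m ^ (r : ℕ) * iotaUm m (c r) k) =
        (fun k => ∑ r : Fin m, uu m ^ (r : ℕ) * iotaUm m (c' r) k) →
      c = c' := by
  simp only [Gmat_eq_weightedMatrix, sum_uu_pow_mul_iotaUm]
  exact (stmt4_general w (Bmat m) m).imp_right fun hinj _ _ _ _ h => hinj h

end
end

section
/- Let m ≥ 1. The map Φ : U_m → ℤ[i] defined by Φ(Σ_{j=0}^{m-1} b_j u^j) = Σ_{j=0}^{m-1} ψ(b_j) (1+i)^j, where b_j ∈ F₂ are the coefficients of the unique polynomial representative of degree < m and ψ : F₂ → ℤ[i] sends 0 ↦ 0 and 1 ↦ 1, is injective, and its image is a complete set of coset representatives of ℤ[i] modulo the ideal (1+i)^m ℤ[i]. -/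
/-!
Digit systems multiply: if `f d` runs over the residues modulo a regular `a` and `g e` over those
modulo `b`, then `f d + a * g e` runs over the residues modulo `a * b`. Hence digits `ψ` modulo
`π` give expansions `∑ ψ (b j) π ^ j` modulo `π ^ m`, indexed by vectors of length `m`, that is,
by the elements of `S[X] / (X ^ m)`. In `ℤ[i]` the digits `0, 1` work for `π = 1 + i`, because
`1 + i` divides `x + y i` exactly when `x + y` is even.
-/

open Polynomial

noncomputable section

/-- The imaginary unit `i` of the Gaussian integers. -/
def gi : GaussianInt := ⟨0, 1⟩

/-- `psiG` sends `0 ↦ 0` and `1 ↦ 1` from `F₂` to `ℤ[i]`. -/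
def psiG (b : F2) : GaussianInt := (b.val : GaussianInt)

section ResidueSystem

variable {R ι κ : Type*} [Ring R] {a b : R} {f : ι → R} {g : κ → R}

/-- A family `f` is a complete system of residues modulo `a` if every `z` is congruent to exactly
one `f d`. The index `d`, not just the value `f d`, is required to be unique. -/
def IsResidueSystem (f : ι → R) (a : R) : Prop :=
  ∀ z, ∃! d, a ∣ z - f d

namespace IsResidueSystem

theorem injective (hf : IsResidueSystem f a) : Function.Injective f :=
  fun d _ h => (hf (f d)).unique (by simp) (by simp [h])

theorem comp_bijective (hf : IsResidueSystem f a) {e : κ → ι} (he : Function.Bijective e) :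
    IsResidueSystem (f ∘ e) a :=
  fun z => he.existsUnique_iff.1 (hf z)

protected theorem add_mul (ha : IsLeftRegular a) (hf : IsResidueSystem f a)
    (hg : IsResidueSystem g b) :
    IsResidueSystem (fun p : ι × κ => f p.1 + a * g p.2) (a * b) := by
  intro z
  obtain ⟨d, ⟨w, hw⟩, hd⟩ := hf z
  obtain ⟨e, he, he_unique⟩ := hg w
  have sub_eq (e' : κ) : z - (f d + a * g e') = a * (w - g e') := by
    rw [← sub_sub, hw, mul_sub]
  refine ⟨(d, e), ?_, ?_⟩
  · simpa only [sub_eq] using mul_dvd_mul_left a he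
  · rintro ⟨d', e'⟩ h
    have hd' : a ∣ z - f d' := by
      have := (dvd_of_mul_right_dvd h).add (dvd_mul_right a (g e'))
      rwa [sub_add_eq_sub_sub, sub_add_cancel] at this
    obtain rfl := hd d' hd'
    rw [sub_eq, ha.dvd_cancel_left] at h
    rw [he_unique e' h]

end IsResidueSystem

end ResidueSystem

theorem IsResidueSystem.sum_mul_pow {R ι : Type*} [CommRing R] {π : R} {ψ : ι → R}
    (hπ : IsLeftRegular π) (hψ : IsResidueSystem ψ π) (n : ℕ) :
    IsResidueSystem (fun b : Fin n → ι => ∑ j, ψ (b j) * π ^ (j : ℕ)) (π ^ n) := by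
  induction n with
  | zero => exact fun z => ⟨Fin.elim0, by simp, fun _ _ => Subsingleton.elim _ _⟩
  | succ n ih =>
    have split_first (b : Fin (n + 1) → ι) : ∑ j, ψ (b j) * π ^ (j : ℕ) =
        ψ (b 0) + π * ∑ j : Fin n, ψ (b j.succ) * π ^ (j : ℕ) := by
      simp only [Fin.sum_univ_succ, Fin.val_zero, pow_zero, mul_one, Fin.val_succ, pow_succ',
        Finset.mul_sum, mul_left_comm]
    simp only [split_first, pow_succ']
    exact (hψ.add_mul hπ ih).comp_bijective (Fin.consEquiv fun _ => ι).symm.bijective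

section TruncatedPolynomial

variable {S : Type*} [CommRing S] (m : ℕ)

theorem mk_span_X_pow_eq_iff_coeff (p q : S[X]) :
    Ideal.Quotient.mk (Ideal.span {X ^ m}) p = Ideal.Quotient.mk (Ideal.span {X ^ m}) q ↔
      ∀ j < m, p.coeff j = q.coeff j := by
  simp only [Ideal.Quotient.eq, Ideal.mem_span_singleton, X_pow_dvd_iff, coeff_sub, sub_eq_zero]

/-- The coordinates of `S[X] / (X ^ m)`: the coefficients of the representative of degree `< m`,
which are those of degree `< m` of any representative. -/
def quotXPowCoeff : (S[X] ⧸ Ideal.span {(X : S[X]) ^ m}) → Fin m → S :=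
  Quotient.lift (fun p j => p.coeff j) fun p q h =>
    funext fun j => (mk_span_X_pow_eq_iff_coeff m p q).1 (Quotient.sound h) j j.isLt

theorem quotXPowCoeff_mk (p : S[X]) (j : Fin m) :
    quotXPowCoeff m (Ideal.Quotient.mk _ p) j = p.coeff j :=
  rfl

theorem quotXPowCoeff_bijective : Function.Bijective (quotXPowCoeff (S := S) m) := by
  constructor
  · intro x y h
    obtain ⟨p, rfl⟩ := Ideal.Quotient.mk_surjective x
    obtain ⟨q, rfl⟩ := Ideal.Quotient.mk_surjective y
    exact (mk_span_X_pow_eq_iff_coeff m p q).2 fun j hj => congrFun h ⟨j, hj⟩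
  · intro b
    exact ⟨Ideal.Quotient.mk _ ((degreeLTEquiv S m).symm b), (degreeLTEquiv S m).apply_symm_apply b⟩

end TruncatedPolynomial

theorem stmt6_general {R S : Type*} [CommRing R] [CommRing S] {π : R} {ψ : S → R}
    (hπ : IsLeftRegular π) (hψ : IsResidueSystem ψ π) (m : ℕ) :
    ∃ Φ : (S[X] ⧸ Ideal.span {(X : S[X]) ^ m}) → R,
      (∀ p : S[X], Φ (Ideal.Quotient.mk (Ideal.span {(X : S[X]) ^ m}) p) =
        ∑ j ∈ Finset.range m, ψ (p.coeff j) * π ^ j) ∧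
      Function.Injective Φ ∧
      ∀ z : R, ∃! x, π ^ m ∣ z - Φ x := by
  have hΦ := (hψ.sum_mul_pow hπ m).comp_bijective (quotXPowCoeff_bijective (S := S) m)
  refine ⟨_, fun p => ?_, hΦ.injective, hΦ⟩
  simp only [Function.comp_apply, quotXPowCoeff_mk]
  exact Fin.sum_univ_eq_sum_range (fun j => ψ (p.coeff j) * π ^ j) m

theorem isLeftRegular_one_add_gi : IsLeftRegular (1 + gi) :=
  (IsRegular.of_ne_zero fun h => by simpa [gi] using congrArg Zsqrtd.re h).left

theorem one_add_gi_dvd_iff (z : GaussianInt) : 1 + gi ∣ z ↔ Even (z.re + z.im) := by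
  constructor
  · rintro ⟨w, rfl⟩
    exact ⟨w.re, by simp [gi]⟩
  · rintro ⟨k, hk⟩
    have hre : z.re = k + (k - z.im) := by lia
    exact ⟨⟨k, z.im - k⟩, Zsqrtd.ext (by simpa [gi] using hre) (by simp [gi])⟩

theorem isResidueSystem_psiG : IsResidueSystem psiG (1 + gi) := by
  intro z
  have dvd_iff (b : F2) : 1 + gi ∣ z - psiG b ↔ b = ((z.re + z.im : ℤ) : F2) := by
    rw [one_add_gi_dvd_iff, ← ZMod.intCast_eq_zero_iff_even, eq_comm (a := b),
      ← sub_eq_zero (b := b)]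
    simp [psiG, -ZMod.natCast_val, ZMod.natCast_zmod_val, sub_add_eq_add_sub]
  simp only [dvd_iff, existsUnique_eq]

/-- The map `Φ : U_m → ℤ[i]`, defined on the unique polynomial representative of
degree `< m` by `Φ(Σ b_j u^j) = Σ ψ(b_j)(1+i)^j`, is injective, and its image is a
complete set of coset representatives of `ℤ[i]` modulo `(1+i)^m ℤ[i]`. -/
theorem stmt6 (m : ℕ) (hm : 1 ≤ m) :
    ∃ Φ : Um m → GaussianInt,
      (∀ p : Polynomial F2, p.degree < (m : WithBot ℕ) →
        Φ (Ideal.Quotient.mk (Ideal.span {(X : Polynomial F2) ^ m}) p) =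
          ∑ j ∈ Finset.range m, psiG (p.coeff j) * (1 + gi) ^ j) ∧
      Function.Injective Φ ∧
      ∀ z : GaussianInt, ∃! x : Um m, (1 + gi) ^ m ∣ z - Φ x := by
  obtain ⟨Φ, hΦ, h⟩ := stmt6_general isLeftRegular_one_add_gi isResidueSystem_psiG m
  exact ⟨Φ, fun p _ => hΦ p, h⟩

end
end

section
/- Let m ≥ 2 be even, set n = 2^m, and let Λ = { (1+i)^m a + Φ(c) : a ∈ ℤ[i]^n, c ∈ C_{2^m} } ⊆ ℤ[i]^n, where Φ is applied componentwise. Let L_{2^m} = { χ(c) : c ∈ C_{2^m} } where χ(x) = Φ(x) mod 2^{m/2} is applied componentwise (with w mod 2^{m/2} the Gaussian integer whose real and imaginary parts are the residues in {0,…,2^{m/2}−1} of Re w and Im w). Then Λ = { (1+i)^m a + x : a ∈ ℤ[i]^n, x ∈ L_{2^m} }, and this decomposition is unique: every λ ∈ Λ can be written in exactly one way as λ = (1+i)^m a + x with a ∈ ℤ[i]^n and x ∈ L_{2^m}. -/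
open Polynomial

noncomputable section

/-- The linear code `C_{2^m} = { z · G_{2^m} : z ∈ U_m^{2^m} }`. -/
def Code (m : ℕ) : Set ((Fin m → Fin 2) → Um m) :=
  {c | ∃ z, c = Matrix.vecMul z (Gmat m)}

/-- Componentwise reduction of a Gaussian integer modulo `M`: the real and imaginary
parts are replaced by their residues in `{0, …, M-1}`. -/
def gmod (M : ℤ) (z : GaussianInt) : GaussianInt := ⟨z.re % M, z.im % M⟩

/-!
Let `m = 2h`. Since `(1 + i)^2 = 2i`, the modulus `(1 + i)^m` is an associate of `2^h`, so reducing
real and imaginary parts modulo `2^h` selects one representative from each residue class of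
`ℤ[i]` modulo `(1 + i)^m`. A decomposition `v = (1 + i)^m a + x` with `x` reduced therefore forces
`x = v mod 2^h`, and then `a` by cancellation.
-/

/-- `IsReductionMod d r` says that `r` selects one representative from each residue class modulo the
right ideal `dR`. It abstracts the reductions `gmod` of `ℤ[i]` and of `ℤ[i]^n`. -/
structure IsReductionMod {R : Type*} [Ring R] (d : R) (r : R → R) : Prop where
  dvd_sub : ∀ x, d ∣ x - r x
  eq_of_dvd_sub : ∀ {x y}, d ∣ x - y → r x = r y

namespace IsReductionMod

variable {R : Type*} [Ring R] {d : R} {r : R → R}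

theorem apply_mul_add (hr : IsReductionMod d r) (a x : R) : r (d * a + x) = r x :=
  hr.eq_of_dvd_sub ⟨a, add_sub_cancel_right _ _⟩

theorem apply_apply (hr : IsReductionMod d r) (x : R) : r (r x) = r x :=
  (hr.eq_of_dvd_sub (hr.dvd_sub x)).symm

theorem exists_eq_mul_add (hr : IsReductionMod d r) (x : R) : ∃ b, x = d * b + r x :=
  (hr.dvd_sub x).imp fun _ => eq_add_of_sub_eq

theorem of_associated {e : R} (hr : IsReductionMod d r) (hde : Associated d e) :
    IsReductionMod e r where
  dvd_sub x := hde.dvd_iff_dvd_left.1 (hr.dvd_sub x)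
  eq_of_dvd_sub h := hr.eq_of_dvd_sub (hde.dvd_iff_dvd_left.2 h)

theorem pi {ι : Type*} (hr : IsReductionMod d r) :
    IsReductionMod (fun _ : ι => d) (fun x k => r (x k)) where
  dvd_sub x := pi_dvd_iff.2 fun k => hr.dvd_sub (x k)
  eq_of_dvd_sub h := funext fun k => hr.eq_of_dvd_sub (pi_dvd_iff.1 h k)

theorem setOf_mul_add_eq (hr : IsReductionMod d r) (S : Set R) :
    {v | ∃ a, ∃ s ∈ S, v = d * a + s} =
      {v | ∃ a, ∃ x ∈ {y | ∃ s ∈ S, y = r s}, v = d * a + x} := by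
  ext v
  constructor
  · rintro ⟨a, s, hs, rfl⟩
    obtain ⟨b, hb⟩ := hr.exists_eq_mul_add s
    exact ⟨a + b, r s, ⟨s, hs, rfl⟩, by rw [mul_add, add_assoc, ← hb]⟩
  · rintro ⟨a, _, ⟨s, hs, rfl⟩, rfl⟩
    obtain ⟨b, hb⟩ := hr.exists_eq_mul_add s
    exact ⟨a - b, s, hs, by rw [eq_sub_of_add_eq' hb.symm, mul_sub, add_sub_left_comm, add_comm]⟩

theorem eq_and_eq_of_mul_add_eq (hr : IsReductionMod d r) (hd : IsLeftRegular d) {a b x y : R}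
    (hx : r x = x) (hy : r y = y) (h : d * a + x = d * b + y) : a = b ∧ x = y := by
  have remainder_eq : x = y := by
    simpa only [hr.apply_mul_add, hx, hy] using congrArg r h
  subst remainder_eq
  exact ⟨hd (add_right_cancel h), rfl⟩

theorem existsUnique_mul_add (hr : IsReductionMod d r) (hd : IsLeftRegular d) {S : Set R} {v : R}
    (hv : ∃ a, ∃ x ∈ {y | ∃ s ∈ S, y = r s}, v = d * a + x) :
    ∃! p : R × R, (∃ s ∈ S, p.2 = r s) ∧ v = d * p.1 + p.2 := by
  obtain ⟨a, _, ⟨s, hs, rfl⟩, rfl⟩ := hv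
  refine ⟨(a, r s), ⟨⟨s, hs, rfl⟩, rfl⟩, ?_⟩
  rintro ⟨b, _⟩ ⟨⟨t, -, rfl⟩, h⟩
  exact Prod.ext_iff.2 <|
    hr.eq_and_eq_of_mul_add_eq hd (hr.apply_apply t) (hr.apply_apply s) h.symm

end IsReductionMod

theorem isReductionMod_gmod (M : ℤ) : IsReductionMod (M : GaussianInt) (gmod M) where
  dvd_sub _ := (Zsqrtd.intCast_dvd M _).2 ⟨Int.dvd_self_sub_emod, Int.dvd_self_sub_emod⟩
  eq_of_dvd_sub h :=
    have ⟨hre, him⟩ := (Zsqrtd.intCast_dvd M _).1 h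
    Zsqrtd.ext (Int.emod_eq_emod_iff_emod_sub_eq_zero.2 (Int.emod_eq_zero_of_dvd hre))
      (Int.emod_eq_emod_iff_emod_sub_eq_zero.2 (Int.emod_eq_zero_of_dvd him))

theorem isUnit_gi : IsUnit gi :=
  IsUnit.of_mul_eq_one (-gi) (by ext <;> simp [gi])

theorem associated_two_one_add_gi_sq : Associated 2 ((1 + gi) ^ 2) := by
  have one_add_gi_sq : (1 + gi) ^ 2 = 2 * gi := by ext <;> simp [gi, pow_two]
  rw [one_add_gi_sq]
  exact associated_mul_unit_right 2 gi isUnit_gi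

theorem associated_two_pow_one_add_gi_pow {m : ℕ} (hm : Even m) :
    Associated ((2 ^ (m / 2) : ℤ) : GaussianInt) ((1 + gi) ^ m) := by
  have associated_pow := associated_two_one_add_gi_sq.pow_pow (n := m / 2)
  rw [← pow_mul, Nat.two_mul_div_two_of_even hm] at associated_pow
  exact_mod_cast associated_pow

theorem isLeftRegular_one_add_gi_pow (m : ℕ) : IsLeftRegular ((1 + gi) ^ m) := by
  have one_add_gi_ne_zero : 1 + gi ≠ 0 := fun h => by
    simpa [gi] using congrArg Zsqrtd.re h
  exact (IsRegular.of_ne_zero (pow_ne_zero m one_add_gi_ne_zero)).left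

theorem stmt11_general {m : ℕ} (hm : Even m) {ι : Type*} (S : Set (ι → GaussianInt)) :
    {v | ∃ a : ι → GaussianInt, ∃ s ∈ S, v = fun k => (1 + gi) ^ m * a k + s k} =
      {v | ∃ a : ι → GaussianInt, ∃ x ∈ {y | ∃ s ∈ S, y = fun k => gmod (2 ^ (m / 2)) (s k)},
        v = fun k => (1 + gi) ^ m * a k + x k} ∧
    ∀ v ∈ {v | ∃ a : ι → GaussianInt, ∃ s ∈ S, v = fun k => (1 + gi) ^ m * a k + s k},
      ∃! p : (ι → GaussianInt) × (ι → GaussianInt),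
        (∃ s ∈ S, p.2 = fun k => gmod (2 ^ (m / 2)) (s k)) ∧
        v = fun k => (1 + gi) ^ m * p.1 k + p.2 k := by
  have reduction : IsReductionMod (fun _ : ι => (1 + gi) ^ m)
      (fun s k => gmod (2 ^ (m / 2)) (s k)) :=
    ((isReductionMod_gmod _).of_associated (associated_two_pow_one_add_gi_pow hm)).pi
  have regular : IsLeftRegular (fun _ : ι => (1 + gi) ^ m) :=
    Pi.isLeftRegular_iff.2 fun _ => isLeftRegular_one_add_gi_pow m
  have lattice_eq := reduction.setOf_mul_add_eq S
  exact ⟨lattice_eq, fun v hv => reduction.existsUnique_mul_add regular (lattice_eq.subset hv)⟩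

/-- For even `m ≥ 2`, with `Φ : U_m → ℤ[i]` the radix-`(1+i)` embedding, the lattice
`Λ = { (1+i)^m a + Φ(c) : a ∈ ℤ[i]^n, c ∈ C_{2^m} }` equals
`{ (1+i)^m a + x : a ∈ ℤ[i]^n, x ∈ L_{2^m} }`, where
`L_{2^m} = { Φ(c) mod 2^(m/2) : c ∈ C_{2^m} }` (mod taken componentwise), and this
decomposition of each `λ ∈ Λ` as `(1+i)^m a + x` with `x ∈ L_{2^m}` is unique. -/
theorem stmt11 (m : ℕ) (hm : 2 ≤ m) (heven : Even m)
    (Φ : Um m → GaussianInt)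
    (hΦ : ∀ p : Polynomial F2, p.degree < (m : WithBot ℕ) →
      Φ (Ideal.Quotient.mk (Ideal.span {(X : Polynomial F2) ^ m}) p) =
        ∑ j ∈ Finset.range m, psiG (p.coeff j) * (1 + gi) ^ j) :
    ({v : (Fin m → Fin 2) → GaussianInt |
        ∃ a : (Fin m → Fin 2) → GaussianInt, ∃ c ∈ Code m,
          v = fun k => (1 + gi) ^ m * a k + Φ (c k)} =
      {v : (Fin m → Fin 2) → GaussianInt |
        ∃ a : (Fin m → Fin 2) → GaussianInt,
        ∃ x ∈ {y : (Fin m → Fin 2) → GaussianInt |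
            ∃ c ∈ Code m, y = fun k => gmod (2 ^ (m / 2)) (Φ (c k))},
          v = fun k => (1 + gi) ^ m * a k + x k}) ∧
    ∀ v ∈ {v : (Fin m → Fin 2) → GaussianInt |
        ∃ a : (Fin m → Fin 2) → GaussianInt, ∃ c ∈ Code m,
          v = fun k => (1 + gi) ^ m * a k + Φ (c k)},
      ∃! p : ((Fin m → Fin 2) → GaussianInt) × ((Fin m → Fin 2) → GaussianInt),
        (∃ c ∈ Code m, p.2 = fun k => gmod (2 ^ (m / 2)) (Φ (c k))) ∧
        v = fun k => (1 + gi) ^ m * p.1 k + p.2 k := by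
  simpa only [Set.exists_mem_image] using
    stmt11_general heven ((fun c k => Φ (c k)) '' Code m)

end
end
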